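/- For every positive integer k and positive integer d there is a constant C depending only on k and d with the following property. Let p₁, …, p_k : ℝⁿ → ℝ be multilinear polynomials of degree at most d with |p_j|₂ ≤ 1 for all j and Inf_i(p_j) ≤ τ for all i and j, where 0 < τ. Define A(p₁, …, p_k) := Σ_{S ⊆ {1,…,k}} (−1)^{|S|}·(∏_{i∈S} p_i)·L(∏_{i∉S} p_i), where L(q) denotes the unique multilinear polynomial agreeing with q on {−1,1}ⁿ. Then |A(p₁, …, p_k)|₂ ≤ C·τ^{k/4}. -/

import Mathlib

open MeasureTheory ProbabilityTheory

/-- The standard Gaussian measure on `ℝⁿ`. -/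
noncomputable def stdGaussian (n : ℕ) : Measure (Fin n → ℝ) :=
  Measure.pi fun _ => gaussianReal 0 1

/-- The Gaussian `L²` norm of a polynomial on `ℝⁿ`. -/
noncomputable def gaussL2 {n : ℕ} (p : MvPolynomial (Fin n) ℝ) : ℝ :=
  Real.sqrt (∫ x, (MvPolynomial.eval x p) ^ 2 ∂(stdGaussian n))

/-- A polynomial is multilinear if it has degree at most `1` in each variable. -/
def IsMultilinear {n : ℕ} (q : MvPolynomial (Fin n) ℝ) : Prop :=
  ∀ j, q.degreeOf j ≤ 1

/-- The `i`-th influence `Inf_i(q) = E_X[(∂q/∂x_i)(X)²]`. -/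
noncomputable def influence {n : ℕ} (i : Fin n) (q : MvPolynomial (Fin n) ℝ) : ℝ :=
  ∫ x, (MvPolynomial.eval x (MvPolynomial.pderiv i q)) ^ 2 ∂(stdGaussian n)

/-- `L(q)`: the multilinearization of `q`, the unique multilinear polynomial agreeing with `q`
on `{-1, 1}ⁿ`, obtained by reducing each exponent mod `2`. -/
noncomputable def multilinearize {n : ℕ} (q : MvPolynomial (Fin n) ℝ) :
    MvPolynomial (Fin n) ℝ :=
  ∑ a ∈ q.support,
    MvPolynomial.monomial (Finsupp.mapRange (· % 2) (Nat.zero_mod 2) a) (q.coeff a)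

/-- The multilinear error term
`A(p₁, …, p_k) = ∑_{S ⊆ [k]} (-1)^{|S|} (∏_{i ∈ S} pᵢ) · L(∏_{i ∉ S} pᵢ)`. -/
noncomputable def AError {n k : ℕ} (p : Fin k → MvPolynomial (Fin n) ℝ) :
    MvPolynomial (Fin n) ℝ :=
  ∑ S : Finset (Fin k),
    (-1 : MvPolynomial (Fin n) ℝ) ^ S.card * (∏ i ∈ S, p i) *
      multilinearize (∏ i ∈ Sᶜ, p i)
/-! ### Combinatorial part -/

lemma sum_le_sum_inj {α β : Type*} [Fintype α] [Fintype β] (φ : α → β)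
    (f : α → ℝ) (g : β → ℝ) (hφ : ∀ a a', f a ≠ 0 → f a' ≠ 0 → φ a = φ a' → a = a')
    (hg : ∀ b, 0 ≤ g b)
    (h : ∀ a, f a ≠ 0 → f a ≤ g (φ a)) : ∑ a, f a ≤ ∑ b, g b := by
  classical
  calc ∑ a, f a = ∑ a ∈ Finset.univ.filter (fun a => f a ≠ 0), f a := by
        rw [Finset.sum_filter_ne_zero]
    _ ≤ ∑ a ∈ Finset.univ.filter (fun a => f a ≠ 0), g (φ a) :=
        Finset.sum_le_sum fun a ha => h a (by simpa using ha)
    _ = ∑ b ∈ (Finset.univ.filter (fun a => f a ≠ 0)).image φ, g b := by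
        rw [Finset.sum_image]
        intro a ha a' ha' hh
        exact hφ a a' (by simpa using ha) (by simpa using ha') hh
    _ ≤ ∑ b, g b := Finset.sum_le_sum_of_subset_of_nonneg (Finset.subset_univ _)
        fun b _ _ => hg b

/-- number of true entries -/
def bcard {ι : Type*} [Fintype ι] (J : ι → Bool) : ℕ := ∑ j, (J j).toNat

/-- indicator of `count = 0` or `count ≥ q` -/
noncomputable def okw {ι : Type*} [Fintype ι] (q : ℕ) (J : ι → Bool) : ℝ :=
  if bcard J = 0 ∨ q ≤ bcard J then 1 else 0

lemma okw_nonneg {ι : Type*} [Fintype ι] (q : ℕ) (J : ι → Bool) : 0 ≤ okw q J := by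
  unfold okw; split_ifs <;> norm_num

lemma okw_le_one {ι : Type*} [Fintype ι] (q : ℕ) (J : ι → Bool) : okw q J ≤ 1 := by
  unfold okw; split_ifs <;> norm_num

lemma one_add_mul_pow_le (q : ℕ) (hq : 1 ≤ q) (K t : ℝ) (hK : 0 ≤ K) (ht : 0 ≤ t) (ht1 : t ≤ 1) :
    (1 + K * t) ^ q ≤ 1 + (1 + K) ^ q * t := by
  have h : (1 + K * t) ^ q ≤ 1 + ((1 + K) ^ q - 1) * t := by
    induction q, hq using Nat.le_induction with
    | base => nlinarith
    | succ m hm ih =>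
      have h1 : (1:ℝ) ≤ (1 + K) ^ m := one_le_pow₀ (by linarith)
      have h2 : 0 ≤ ((1 + K) ^ m - 1) * K := mul_nonneg (by linarith) hK
      calc (1 + K * t) ^ (m+1) = (1 + K * t) ^ m * (1 + K * t) := pow_succ _ _
        _ ≤ (1 + ((1 + K) ^ m - 1) * t) * (1 + K * t) := by gcongr
        _ = 1 + K * t + ((1+K)^m - 1) * t + ((1+K)^m - 1) * K * (t * t) := by ring
        _ ≤ 1 + K * t + ((1+K)^m - 1) * t + ((1+K)^m - 1) * K * t := by
          gcongr; nlinarith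
        _ = 1 + ((1 + K) ^ (m+1) - 1) * t := by ring
  linarith

/-- One-vertex inequality. -/
lemma onept {ι : Type*} [Fintype ι] [DecidableEq ι] [Nonempty ι] (q : ℕ) (hq : 1 ≤ q)
    (a b α : ι → ℝ)
    (ha : ∀ j, 0 ≤ a j) (hb : ∀ j, 0 ≤ b j) (hα0 : ∀ j, 0 ≤ α j)
    (hα : ∀ j, a j ^ q + (1 + 2 ^ Fintype.card ι) ^ q * b j ^ q ≤ α j ^ q) :
    ∑ J : ι → Bool, okw q J * ∏ j, (if J j then b j else a j) ≤ ∏ j, α j := by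
  set K : ℝ := 2 ^ Fintype.card ι with hK
  have hK1 : (1:ℝ) ≤ K := one_le_pow₀ (by norm_num)
  have hq0 : q ≠ 0 := by omega
  have hcard : ((Finset.univ : Finset (ι → Bool)).card : ℝ) = K := by
    simp [hK]
  refine le_of_pow_le_pow_left₀ hq0 (Finset.prod_nonneg fun j _ => hα0 j) ?_
  rw [← Finset.prod_pow]
  have hl : (1:ℝ) ≤ (1 + K) ^ q := one_le_pow₀ (by linarith)
  by_cases hcase : ∃ j0, a j0 < b j0
  · obtain ⟨j0, hj0⟩ := hcase
    set P : ℝ := ∏ j, max (a j) (b j) with hP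
    have hP0 : 0 ≤ P := Finset.prod_nonneg fun j _ => le_max_of_le_left (ha j)
    have h1 : ∑ J : ι → Bool, okw q J * ∏ j, (if J j then b j else a j) ≤ K * P := by
      calc _ ≤ ∑ J : ι → Bool, P := by
            refine Finset.sum_le_sum fun J _ => ?_
            have : ∏ j, (if J j then b j else a j) ≤ P := by
              refine Finset.prod_le_prod (fun j _ => ?_) (fun j _ => ?_)
              · split_ifs; exacts [hb j, ha j]
              · split_ifs; exacts [le_max_right _ _, le_max_left _ _]
            have h0 : 0 ≤ ∏ j, (if J j then b j else a j) :=
              Finset.prod_nonneg fun j _ => by split_ifs; exacts [hb j, ha j]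
            nlinarith [okw_le_one q J, okw_nonneg q J]
        _ = K * P := by rw [Finset.sum_const, nsmul_eq_mul, hcard]
    have h2 : (1 + K) ^ q * P ^ q ≤ ∏ j, α j ^ q := by
      have : (1 + K) ^ q * P ^ q = ∏ j, ((if j = j0 then (1 + K) ^ q else 1) * (max (a j) (b j)) ^ q) := by
        rw [Finset.prod_mul_distrib, Finset.prod_pow]
        simp [hP]
      rw [this]
      refine Finset.prod_le_prod (fun j _ => ?_) (fun j _ => ?_)
      · have : 0 ≤ max (a j) (b j) := le_max_of_le_left (ha j)
        split_ifs <;> positivity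
      · refine le_trans ?_ (hα j)
        have e1 : 0 ≤ a j ^ q := pow_nonneg (ha j) q
        have e2 : 0 ≤ b j ^ q := pow_nonneg (hb j) q
        split_ifs with h
        · subst h
          rw [max_eq_right hj0.le]; linarith
        · rw [one_mul]
          rcases max_choice (a j) (b j) with h | h <;> rw [h] <;> nlinarith
    have h0 : 0 ≤ ∑ J : ι → Bool, okw q J * ∏ j, (if J j then b j else a j) :=
      Finset.sum_nonneg fun J _ => mul_nonneg (okw_nonneg _ _)
        (Finset.prod_nonneg fun j _ => by split_ifs; exacts [hb j, ha j])
    calc _ ≤ (K * P) ^ q := pow_le_pow_left₀ h0 h1 q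
      _ ≤ ((1 + K) * P) ^ q := by gcongr; linarith
      _ = (1 + K) ^ q * P ^ q := mul_pow _ _ _
      _ ≤ _ := h2
  · push Not at hcase
    set r : ι → ℝ := fun j => b j / a j with hr
    have hr0 : ∀ j, 0 ≤ r j := fun j => div_nonneg (hb j) (ha j)
    have hr1 : ∀ j, r j ≤ 1 := fun j => div_le_one_of_le₀ (hcase j) (ha j)
    have hbr : ∀ j, b j = r j * a j := by
      intro j
      by_cases h : a j = 0
      · have := hcase j; have := hb j; rw [h] at *; simp; linarith
      · simp [hr, h]
    obtain ⟨j0, -, hj0⟩ := Finset.exists_max_image Finset.univ r Finset.univ_nonempty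
    set t : ℝ := r j0 ^ q with ht
    have ht0 : 0 ≤ t := pow_nonneg (hr0 j0) q
    have ht1 : t ≤ 1 := pow_le_one₀ (hr0 j0) (hr1 j0)
    set P : ℝ := ∏ j, a j with hP
    have hP0 : 0 ≤ P := Finset.prod_nonneg fun j _ => ha j
    have key : ∀ J : ι → Bool, okw q J * ∏ j, (if J j then b j else a j)
        ≤ (if J = fun _ => false then P else 0) + t * P := by
      intro J
      have e1 : ∏ j, (if J j then b j else a j) = (∏ j, r j ^ (J j).toNat) * P := by
        rw [hP, ← Finset.prod_mul_distrib]
        refine Finset.prod_congr rfl fun j _ => ?_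
        cases h : J j <;> simp [hbr j]
      have e2 : ∏ j, r j ^ (J j).toNat ≤ r j0 ^ bcard J := by
        rw [bcard, ← Finset.prod_pow_eq_pow_sum]
        exact Finset.prod_le_prod (fun j _ => pow_nonneg (hr0 j) _)
          (fun j hj => pow_le_pow_left₀ (hr0 j) (hj0 j hj) _)
      rw [e1]
      split_ifs with hJ
      · subst hJ
        simp [okw, bcard]
        positivity
      · unfold okw
        split_ifs with h
        · rcases h with h | h
          · exfalso; apply hJ; funext j
            have := (Finset.sum_eq_zero_iff.mp h) j (Finset.mem_univ j)
            simpa using this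
          · have e3 : r j0 ^ bcard J ≤ t := pow_le_pow_of_le_one (hr0 j0) (hr1 j0) h
            have := e2.trans e3
            nlinarith
        · have : 0 ≤ t * P := by positivity
          linarith
    have h1 : ∑ J : ι → Bool, okw q J * ∏ j, (if J j then b j else a j) ≤ (1 + K * t) * P := by
      calc _ ≤ ∑ J : ι → Bool, ((if J = fun _ => false then P else 0) + t * P) :=
            Finset.sum_le_sum fun J _ => key J
        _ = (1 + K * t) * P := by
          rw [Finset.sum_add_distrib, Finset.sum_const, nsmul_eq_mul, hcard]
          simp; ring
    have h0 : 0 ≤ ∑ J : ι → Bool, okw q J * ∏ j, (if J j then b j else a j) :=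
      Finset.sum_nonneg fun J _ => mul_nonneg (okw_nonneg _ _)
        (Finset.prod_nonneg fun j _ => by split_ifs; exacts [hb j, ha j])
    have h2 : (1 + (1 + K) ^ q * t) * P ^ q ≤ ∏ j, α j ^ q := by
      have : (1 + (1 + K) ^ q * t) * P ^ q
          = ∏ j, ((if j = j0 then (1 + (1 + K) ^ q * t) else 1) * (a j) ^ q) := by
        rw [Finset.prod_mul_distrib, Finset.prod_pow]
        simp [hP]
      rw [this]
      refine Finset.prod_le_prod (fun j _ => ?_) (fun j _ => ?_)
      · have := ha j
        split_ifs <;> positivity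
      · refine le_trans ?_ (hα j)
        split_ifs with h
        · subst h
          rw [hbr j, mul_pow]
          apply le_of_eq; ring
        · have := hb j
          have : 0 ≤ (1 + K) ^ q * b j ^ q := by positivity
          linarith
    calc _ ≤ ((1 + K * t) * P) ^ q := pow_le_pow_left₀ h0 h1 q
      _ = (1 + K * t) ^ q * P ^ q := mul_pow _ _ _
      _ ≤ (1 + (1 + K) ^ q * t) * P ^ q := by
        gcongr
        exact one_add_mul_pow_le q hq K t (by linarith) ht0 ht1
      _ ≤ _ := h2

/-- weight -/
noncomputable def bwt {n : ℕ} (l : ℝ) (t : Fin n → Bool) : ℝ := ∏ v, if t v then l else 1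

lemma bwt_nonneg {n : ℕ} (l : ℝ) (hl : 0 ≤ l) (t : Fin n → Bool) : 0 ≤ bwt l t :=
  Finset.prod_nonneg fun v _ => by split_ifs <;> [exact hl; norm_num]

lemma bwt_eq {n : ℕ} (l : ℝ) (t : Fin n → Bool) : bwt l t = l ^ bcard t := by
  rw [bcard, ← Finset.prod_pow_eq_pow_sum, bwt]
  refine Finset.prod_congr rfl fun j _ => ?_
  cases h : t j <;> simp

lemma exists_root (q : ℕ) (hq : 1 ≤ q) (x : ℝ) (hx : 0 ≤ x) : ∃ y : ℝ, 0 ≤ y ∧ y ^ q = x :=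
  ⟨x ^ ((q : ℝ)⁻¹), Real.rpow_nonneg hx _, Real.rpow_inv_natCast_pow hx (by omega)⟩

/-- Tensorized inequality. -/
lemma tensor {ι : Type*} [Fintype ι] [DecidableEq ι] [Nonempty ι] (q : ℕ) (hq : 1 ≤ q) (n : ℕ) :
    ∀ (g : ι → (Fin n → Bool) → ℝ) (_ : ∀ j t, 0 ≤ g j t) (α : ι → ℝ) (_ : ∀ j, 0 ≤ α j)
    (_ : ∀ j, ∑ t, bwt ((1 + 2 ^ Fintype.card ι) ^ q) t * g j t ^ q ≤ α j ^ q),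
    ∑ M : Fin n → ι → Bool, (∏ v, okw q (M v)) * ∏ j, g j (fun v => M v j) ≤ ∏ j, α j := by
  set l : ℝ := (1 + 2 ^ Fintype.card ι) ^ q with hl
  have hl0 : 0 ≤ l := by positivity
  induction n with
  | zero =>
    intro g hg α hα h
    simp only [Finset.univ_unique, Finset.sum_singleton, Finset.univ_eq_empty, Finset.prod_empty,
      one_mul]
    refine Finset.prod_le_prod (fun j _ => hg _ _) (fun j _ => ?_)
    refine le_of_pow_le_pow_left₀ (by omega : q ≠ 0) (hα j) ?_
    have := h j
    simp only [Finset.univ_unique, Finset.sum_singleton, bwt, Finset.univ_eq_empty,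
      Finset.prod_empty, one_mul] at this
    have e : ∀ t : Fin 0 → Bool, g j t ^ q ≤ α j ^ q := fun t => by
      convert this
    exact e _
  | succ n ih =>
    intro g hg α hα h
    have hs : ∀ (j : ι) (c : Bool),
        0 ≤ ∑ t : Fin n → Bool, bwt l t * g j (Fin.cons c t) ^ q := fun j c =>
      Finset.sum_nonneg fun t _ => mul_nonneg (bwt_nonneg l hl0 t) (pow_nonneg (hg _ _) _)
    choose r hr0 hr using fun j c => exists_root q hq _ (hs j c)
    have hsplit : ∀ j, ∑ t : Fin (n+1) → Bool, bwt l t * g j t ^ q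
        = r j false ^ q + l * r j true ^ q := by
      intro j
      rw [hr, hr, ← (Fin.consEquiv (fun _ => Bool)).sum_comp, Fintype.sum_prod_type]
      simp only [Fintype.sum_bool, Fin.consEquiv, Equiv.coe_fn_mk, bwt, Fin.prod_univ_succ,
        Fin.cons_zero, Fin.cons_succ, Finset.mul_sum]
      rw [add_comm]
      congr 1
      · simp
      · refine Finset.sum_congr rfl fun t _ => by simp; ring
    rw [← (Fin.consEquiv (fun _ => ι → Bool)).sum_comp, Fintype.sum_prod_type]
    calc _ = ∑ J : ι → Bool, okw q J * ∑ M : Fin n → ι → Bool, (∏ v, okw q (M v)) *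
          ∏ j, g j (Fin.cons (J j) (fun v => M v j)) := by
          refine Finset.sum_congr rfl fun J _ => ?_
          rw [Finset.mul_sum]
          refine Finset.sum_congr rfl fun M _ => ?_
          simp only [Fin.consEquiv, Equiv.coe_fn_mk, Fin.prod_univ_succ, Fin.cons_zero,
            Fin.cons_succ]
          rw [mul_assoc]
          congr 2
          refine Finset.prod_congr rfl fun j _ => ?_
          congr 1
          funext v
          refine Fin.cases ?_ (fun v => ?_) v <;> simp
      _ ≤ ∑ J : ι → Bool, okw q J * ∏ j, (if J j then r j true else r j false) := by
          refine Finset.sum_le_sum fun J _ => ?_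
          refine mul_le_mul_of_nonneg_left ?_ (okw_nonneg q J)
          refine ih (fun j t => g j (Fin.cons (J j) t)) (fun j t => hg _ _) _ ?_ ?_
          · intro j; split_ifs <;> exact hr0 _ _
          · intro j
            cases hJ : J j
            · simpa [hJ] using (hr j false).ge
            · simpa [hJ] using (hr j true).ge
      _ ≤ ∏ j, α j := by
          refine onept q hq _ _ α (fun j => hr0 _ _) (fun j => hr0 _ _) hα (fun j => ?_)
          rw [← hl, ← hsplit]; exact h j

/-- split coefficient -/
noncomputable def ct {n : ℕ} (c : (Fin n → Bool) → ℝ) (b u : Fin n → Bool) : ℝ :=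
  open Classical in
  if (∃ v, b v = true) ∧ (∀ v, ¬ (b v = true ∧ u v = true)) then c (fun v => b v || u v) else 0

lemma ct_nonneg {n : ℕ} (c : (Fin n → Bool) → ℝ) (hc : ∀ t, 0 ≤ c t) (b u : Fin n → Bool) :
    0 ≤ ct c b u := by
  unfold ct; split_ifs <;> [exact hc _; exact le_rfl]

lemma ct_ne {n : ℕ} {c : (Fin n → Bool) → ℝ} {b u : Fin n → Bool} (h : ct c b u ≠ 0) :
    (∃ v, b v = true) ∧ (∀ v, ¬ (b v = true ∧ u v = true)) ∧ ct c b u = c (fun v => b v || u v) := by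
  unfold ct at h ⊢
  split_ifs at h ⊢ with h1
  · exact ⟨h1.1, h1.2, rfl⟩
  · exact absurd rfl h

lemma bcard_mono {n : ℕ} (s t : Fin n → Bool) (h : ∀ v, s v = true → t v = true) :
    bcard s ≤ bcard t := by
  refine Finset.sum_le_sum fun v _ => ?_
  cases hs : s v
  · simp
  · simp [h v hs]

lemma disj_eq {n : ℕ} {b u u' : Fin n → Bool} (h : ∀ v, ¬ (b v = true ∧ u v = true))
    (h' : ∀ v, ¬ (b v = true ∧ u' v = true))
    (he : (fun v => b v || u v) = (fun v => b v || u' v)) : u = u' := by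
  funext v
  have h1 := h v
  have h2 := h' v
  have h3 := congrFun he v
  revert h1 h2 h3
  cases b v <;> cases u v <;> cases u' v <;> simp

lemma ct_sum_le {n : ℕ} (c : (Fin n → Bool) → ℝ) (τ : ℝ)
    (hτ0 : 0 ≤ τ)
    (h2 : ∀ v, ∑ t, (if t v then c t ^ 2 else 0) ≤ τ) (b : Fin n → Bool) :
    ∑ u, ct c b u ^ 2 ≤ τ := by
  by_cases hb : ∃ v, b v = true
  · obtain ⟨v0, hv0⟩ := hb
    refine le_trans ?_ (h2 v0)
    refine sum_le_sum_inj (fun u v => b v || u v) _ _ ?_ ?_ ?_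
    · intro u u' hu hu' he
      exact disj_eq (ct_ne (by simpa using hu)).2.1 (ct_ne (by simpa using hu')).2.1 he
    · intro t; split_ifs <;> positivity
    · intro u hu
      rw [(ct_ne (by simpa using hu)).2.2]
      simp [hv0]
  · have : ∀ u, ct c b u = 0 := fun u => by
      unfold ct; rw [if_neg]; exact fun h => hb h.1
    simp [this, hτ0]

lemma count_sub {n : ℕ} (t : Fin n → Bool) :
    ∑ b : Fin n → Bool, ∏ v, (if b v = true ∧ t v = false then (0:ℝ) else 1) = bwt 2 t := by
  rw [bwt, ← Fintype.piFinset_univ, ← Finset.prod_univ_sum (fun _ => Finset.univ)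
    (fun v (x : Bool) => (if x = true ∧ t v = false then (0:ℝ) else 1))]
  refine Finset.prod_congr rfl fun v _ => ?_
  cases h : t v <;> simp

lemma ct_sum_sum_le {n : ℕ} (c : (Fin n → Bool) → ℝ) (d : ℕ)
    (hd : ∀ t, c t ≠ 0 → bcard t ≤ d)
    (h1 : ∑ t, c t ^ 2 ≤ 1) :
    ∑ b, ∑ u, ct c b u ^ 2 ≤ 2 ^ d := by
  rw [← Fintype.sum_prod_type']
  calc ∑ x : (Fin n → Bool) × (Fin n → Bool), ct c x.1 x.2 ^ 2
      ≤ ∑ y : (Fin n → Bool) × (Fin n → Bool), c y.1 ^ 2 *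
        ∏ v, (if y.2 v = true ∧ y.1 v = false then (0:ℝ) else 1) := by
        refine sum_le_sum_inj (fun x => (fun v => x.1 v || x.2 v, x.1)) _ _ ?_ ?_ ?_
        · rintro ⟨b, u⟩ ⟨b', u'⟩ hu hu' he
          simp only [Prod.mk.injEq] at he
          obtain ⟨he, rfl⟩ := he
          rw [disj_eq (ct_ne (by simpa using hu)).2.1 (ct_ne (by simpa using hu')).2.1 he]
        · rintro ⟨t, b⟩
          refine mul_nonneg (by positivity) (Finset.prod_nonneg fun v _ => ?_)
          split_ifs <;> norm_num
        · rintro ⟨b, u⟩ hu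
          rw [(ct_ne (by simpa using hu)).2.2]
          rw [Finset.prod_eq_one, mul_one]
          intro v _
          rw [if_neg]
          simp only
          cases b v <;> simp
    _ = ∑ t, c t ^ 2 * bwt 2 t := by
        rw [Fintype.sum_prod_type]
        refine Finset.sum_congr rfl fun t _ => ?_
        rw [← count_sub, Finset.mul_sum]
    _ ≤ ∑ t, c t ^ 2 * 2 ^ d := by
        refine Finset.sum_le_sum fun t _ => ?_
        by_cases h : c t = 0
        · simp [h]
        · rw [bwt_eq]
          have := hd t h
          gcongr
          norm_num
    _ ≤ 2 ^ d := by
        rw [← Finset.sum_mul]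
        nlinarith [pow_pos (two_pos : (0:ℝ) < 2) d]

/-- validity of a tuple of sets -/
def Valid {ι : Type*} [Fintype ι] {n : ℕ} (M : Fin n → ι → Bool) : Prop :=
  (∀ v, bcard (M v) = 0 ∨ 2 ≤ bcard (M v)) ∧ (∀ j, ∃ v, M v j = true ∧ 4 ≤ bcard (M v))

lemma comb {ι : Type*} [Fintype ι] [DecidableEq ι] [Nonempty ι] (n d : ℕ) (τ : ℝ) (hτ : 0 ≤ τ)
    (c : ι → (Fin n → Bool) → ℝ) (hc : ∀ j t, 0 ≤ c j t)
    (hd : ∀ j t, c j t ≠ 0 → bcard t ≤ d)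
    (h1 : ∀ j, ∑ t, c j t ^ 2 ≤ 1) (h2 : ∀ j v, ∑ t, (if t v then c j t ^ 2 else 0) ≤ τ)
    (β : ℝ) (hβ0 : 0 ≤ β)
    (hβ : β ^ 4 = (((1 + 2 ^ Fintype.card ι) ^ 4) ^ d * (((1 + 2 ^ Fintype.card ι) ^ 2) ^ d) ^ 2
      * 2 ^ d) * τ) :
    ∑ M : Fin n → ι → Bool, (open Classical in if Valid M then ∏ j, c j (fun v => M v j) else 0)
      ≤ β ^ Fintype.card ι := by
  classical
  set l2 : ℝ := (1 + 2 ^ Fintype.card ι) ^ 2 with hl2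
  set l4 : ℝ := (1 + 2 ^ Fintype.card ι) ^ 4 with hl4
  have hK : (0:ℝ) ≤ 2 ^ Fintype.card ι := by positivity
  have hl21 : 1 ≤ l2 := one_le_pow₀ (by linarith)
  have hl41 : 1 ≤ l4 := one_le_pow₀ (by linarith)
  have hs0 : ∀ j b, 0 ≤ ∑ u, bwt l2 u * ct (c j) b u ^ 2 := fun j b =>
    Finset.sum_nonneg fun u _ => mul_nonneg (bwt_nonneg _ (by linarith) _) (by positivity)
  set α : ι → (Fin n → Bool) → ℝ := fun j b => Real.sqrt (∑ u, bwt l2 u * ct (c j) b u ^ 2) with hα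
  have hα0 : ∀ j b, 0 ≤ α j b := fun j b => Real.sqrt_nonneg _
  have hα2 : ∀ j b, α j b ^ 2 = ∑ u, bwt l2 u * ct (c j) b u ^ 2 := fun j b =>
    Real.sq_sqrt (hs0 j b)
  have hα2' : ∀ j b, α j b ^ 2 ≤ l2 ^ d * ∑ u, ct (c j) b u ^ 2 := by
    intro j b
    rw [hα2, Finset.mul_sum]
    refine Finset.sum_le_sum fun u _ => ?_
    by_cases h : ct (c j) b u = 0
    · simp [h]
    · rw [bwt_eq]
      have h3 := ct_ne h
      have : bcard u ≤ d := le_trans (bcard_mono _ _ (by intro v hv; simp [hv]))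
        (hd j _ (h3.2.2 ▸ h))
      gcongr
  -- step 1
  calc _ ≤ ∑ X : (Fin n → ι → Bool) × (Fin n → ι → Bool),
        ((∏ v, okw 4 (X.1 v)) * (∏ v, okw 2 (X.2 v)) *
          ∏ j, ct (c j) (fun v => X.1 v j) (fun v => X.2 v j)) := by
        refine sum_le_sum_inj
          (fun M => (fun v j => M v j && decide (4 ≤ bcard (M v)),
            fun v j => M v j && !decide (4 ≤ bcard (M v)))) _ _ ?_ ?_ ?_
        · intro M M' _ _ he
          simp only [Prod.mk.injEq] at he
          funext v j
          have e1 := congrFun (congrFun he.1 v) j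
          have e2 := congrFun (congrFun he.2 v) j
          revert e1 e2
          cases M v j <;> cases M' v j <;> cases decide (4 ≤ bcard (M v)) <;>
            cases decide (4 ≤ bcard (M' v)) <;> simp
        · rintro ⟨X, Y⟩
          exact mul_nonneg (mul_nonneg (Finset.prod_nonneg fun v _ => okw_nonneg _ _)
            (Finset.prod_nonneg fun v _ => okw_nonneg _ _))
            (Finset.prod_nonneg fun j _ => ct_nonneg _ (hc j) _ _)
        · intro M hM
          have hV : Valid M := by
            by_contra h; simp [h] at hM
          rw [if_pos hV]
          have e4 : ∀ v, okw 4 (fun j => M v j && decide (4 ≤ bcard (M v))) = 1 := by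
            intro v
            by_cases h : 4 ≤ bcard (M v)
            · have : (fun j => M v j && decide (4 ≤ bcard (M v))) = M v := by funext j; simp [h]
              rw [this]; simp [h, okw]
            · have : (fun j => M v j && decide (4 ≤ bcard (M v))) = fun _ => false := by
                funext j; simp [h]
              rw [this]; simp [okw, bcard]
          have e2 : ∀ v, okw 2 (fun j => M v j && !decide (4 ≤ bcard (M v))) = 1 := by
            intro v
            by_cases h : 4 ≤ bcard (M v)
            · have : (fun j => M v j && !decide (4 ≤ bcard (M v))) = fun _ => false := by
                funext j; simp [h]
              rw [this]; simp [okw, bcard]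
            · have : (fun j => M v j && !decide (4 ≤ bcard (M v))) = M v := by funext j; simp [h]
              rw [this, okw, if_pos (hV.1 v)]
          simp only [e4, e2, Finset.prod_const_one, one_mul]
          refine le_of_eq (Finset.prod_congr rfl fun j _ => ?_)
          unfold ct
          rw [if_pos]
          · congr 1; funext v
            simp only; cases M v j <;> cases decide (4 ≤ bcard (M v)) <;> rfl
          · refine ⟨?_, ?_⟩
            · obtain ⟨v, hv, h4⟩ := hV.2 j
              exact ⟨v, by simp [hv, h4]⟩
            · intro v
              simp only; cases M v j <;> cases decide (4 ≤ bcard (M v)) <;> decide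
    _ = ∑ X : (Fin n → ι → Bool), (∏ v, okw 4 (X v)) * ∑ Y : (Fin n → ι → Bool),
          (∏ v, okw 2 (Y v)) * ∏ j, ct (c j) (fun v => X v j) (fun v => Y v j) := by
        rw [Fintype.sum_prod_type]
        refine Finset.sum_congr rfl fun X _ => ?_
        rw [Finset.mul_sum]
        refine Finset.sum_congr rfl fun Y _ => ?_
        ring
    _ ≤ ∑ X : (Fin n → ι → Bool), (∏ v, okw 4 (X v)) * ∏ j, α j (fun v => X v j) := by
        refine Finset.sum_le_sum fun X _ => ?_
        refine mul_le_mul_of_nonneg_left ?_ (Finset.prod_nonneg fun v _ => okw_nonneg _ _)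
        refine tensor 2 (by norm_num) n (fun j u => ct (c j) (fun v => X v j) u)
          (fun j u => ct_nonneg _ (hc j) _ _) _ (fun j => hα0 _ _) (fun j => ?_)
        rw [hα2]
    _ ≤ ∏ j : ι, β := by
        refine tensor 4 (by norm_num) n α hα0 _ (fun _ => hβ0) (fun j => ?_)
        rw [← hl4]
        calc ∑ b, bwt l4 b * α j b ^ 4
            ≤ ∑ b, l4 ^ d * (l2 ^ d * τ) * (l2 ^ d * ∑ u, ct (c j) b u ^ 2) := by
              refine Finset.sum_le_sum fun b _ => ?_
              have q1 : bwt l4 b * α j b ^ 2 ≤ l4 ^ d * α j b ^ 2 := by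
                by_cases h : α j b ^ 2 = 0
                · simp [h]
                · rw [hα2] at h
                  obtain ⟨u, -, hu⟩ := Finset.exists_ne_zero_of_sum_ne_zero h
                  have h' : ct (c j) b u ≠ 0 := by
                    intro h0; simp [h0] at hu
                  have h3 := ct_ne h'
                  have : bcard b ≤ d := le_trans (bcard_mono _ _ (by intro v hv; simp [hv]))
                    (hd j _ (h3.2.2 ▸ h'))
                  rw [bwt_eq]
                  gcongr
              have q2 : α j b ^ 2 ≤ l2 ^ d * τ := (hα2' j b).trans (by
                gcongr; exact ct_sum_le (c j) τ hτ (h2 j) b)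
              have q3 := hα2' j b
              calc bwt l4 b * α j b ^ 4 = (bwt l4 b * α j b ^ 2) * α j b ^ 2 := by ring
                _ ≤ (l4 ^ d * α j b ^ 2) * α j b ^ 2 := by gcongr
                _ ≤ l4 ^ d * (l2 ^ d * τ) * (l2 ^ d * ∑ u, ct (c j) b u ^ 2) := by gcongr
          _ = l4 ^ d * (l2 ^ d * τ) * (l2 ^ d * ∑ b, ∑ u, ct (c j) b u ^ 2) := by
              rw [Finset.mul_sum, Finset.mul_sum]
          _ ≤ l4 ^ d * (l2 ^ d * τ) * (l2 ^ d * 2 ^ d) := by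
              gcongr; exact ct_sum_sum_le (c j) d (hd j) (h1 j)
          _ = β ^ 4 := by rw [hβ]; ring
    _ = β ^ Fintype.card ι := by simp

/-! ### Gaussian moments -/

noncomputable def mom (r : ℕ) : ℝ := ∫ x, x ^ r ∂(gaussianReal 0 1)

lemma mom_integrable (r : ℕ) : Integrable (fun x : ℝ => x ^ r) (gaussianReal 0 1) := by
  have := integrable_pow_of_mem_interior_integrableExpSet (X := id) (μ := gaussianReal 0 1)
    (by simp) r
  simpa using this

lemma mom_zero : mom 0 = 1 := by simp [mom]

lemma mom_odd (r : ℕ) (hr : Odd r) : mom r = 0 := by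
  have h : mom r = - mom r := by
    conv_lhs => rw [mom, show gaussianReal 0 1 = (gaussianReal 0 1).map (fun x => -x) by
      rw [gaussianReal_map_neg]; simp]
    rw [integral_map (by fun_prop) (by fun_prop), mom, ← integral_neg]
    congr 1
    funext x
    exact hr.neg_pow x
  linarith

lemma mom_two : mom 2 = 1 := by
  have h := variance_id_gaussianReal (μ := 0) (v := 1)
  rw [variance_eq_integral (by fun_prop)] at h
  simpa [mom] using h

lemma mom_small (r : ℕ) (h : r ≤ 2) (he : Even r) : mom r = 1 := by
  interval_cases r
  · exact mom_zero
  · exact absurd he (by decide)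
  · exact mom_two

lemma mon_integrable {n : ℕ} (e : Fin n → ℕ) :
    Integrable (fun x : Fin n → ℝ => ∏ v, x v ^ e v) (stdGaussian n) := by
  unfold _root_.stdGaussian
  exact Integrable.fintype_prod (f := fun v (y : ℝ) => y ^ e v) (fun v => mom_integrable (e v))

lemma mon_integral {n : ℕ} (e : Fin n → ℕ) :
    ∫ x : Fin n → ℝ, ∏ v, x v ^ e v ∂(stdGaussian n) = ∏ v, mom (e v) := by
  unfold _root_.stdGaussian
  exact integral_fintype_prod_eq_prod (fun v (y : ℝ) => y ^ e v)

lemma sq_integral {n : ℕ} {I : Type*} [Fintype I] (a : I → ℝ) (E : I → Fin n → ℕ) :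
    ∫ x : Fin n → ℝ, (∑ i, a i * ∏ v, x v ^ E i v) ^ 2 ∂(stdGaussian n)
      = ∑ i, ∑ i', a i * a i' * ∏ v, mom (E i v + E i' v) := by
  have : ∀ x : Fin n → ℝ, (∑ i, a i * ∏ v, x v ^ E i v) ^ 2
      = ∑ i, ∑ i', a i * a i' * ∏ v, x v ^ (E i v + E i' v) := by
    intro x
    rw [sq, Finset.sum_mul_sum]
    refine Finset.sum_congr rfl fun i _ => Finset.sum_congr rfl fun i' _ => ?_
    simp only [pow_add, Finset.prod_mul_distrib]
    ring
  simp_rw [this]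
  rw [integral_finsetSum]
  · refine Finset.sum_congr rfl fun i _ => ?_
    rw [integral_finsetSum]
    · refine Finset.sum_congr rfl fun i' _ => ?_
      rw [integral_const_mul, mon_integral]
    · intro i' _
      exact (mon_integrable _).const_mul _
  · intro i _
    exact integrable_finsetSum _ fun i' _ => (mon_integrable _).const_mul _

lemma parseval {n : ℕ} {I : Type*} [Fintype I] (a : I → ℝ) (E : I → Fin n → ℕ)
    (hE : ∀ i v, a i ≠ 0 → E i v ≤ 1) (hinj : ∀ i i', a i ≠ 0 → a i' ≠ 0 → E i = E i' → i = i') :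
    ∫ x : Fin n → ℝ, (∑ i, a i * ∏ v, x v ^ E i v) ^ 2 ∂(stdGaussian n) = ∑ i, a i ^ 2 := by
  classical
  rw [sq_integral]
  refine Finset.sum_congr rfl fun i _ => ?_
  by_cases hi : a i = 0
  · simp [hi]
  rw [Finset.sum_eq_single i]
  · rw [Finset.prod_eq_one, mul_one, sq]
    intro v _
    have := hE i v hi
    exact mom_small _ (by omega) (by rw [← two_mul]; exact even_two_mul _)
  · intro i' _ hne
    by_cases hi' : a i' = 0
    · simp [hi']
    have : ∃ v, E i v ≠ E i' v := by
      by_contra hcon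
      push Not at hcon
      exact hne (hinj i i' hi hi' (funext hcon)).symm
    obtain ⟨v, hv⟩ := this
    have h1 := hE i v hi
    have h2 := hE i' v hi'
    rw [Finset.prod_eq_zero (Finset.mem_univ v), mul_zero]
    apply mom_odd
    have : E i v + E i' v = 1 := by omega
    rw [this]; exact odd_one
  · simp

/-! ### Polynomial expansions -/

noncomputable def ex {n : ℕ} (t : Fin n → Bool) : Fin n →₀ ℕ :=
  Finsupp.equivFunOnFinite.symm (fun v => (t v).toNat)

@[simp] lemma ex_apply {n : ℕ} (t : Fin n → Bool) (v : Fin n) : ex t v = (t v).toNat := rfl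

lemma ex_inj {n : ℕ} {t t' : Fin n → Bool} (h : ex t = ex t') : t = t' := by
  funext v
  have := DFunLike.congr_fun h v
  simp only [ex_apply] at this
  revert this
  cases t v <;> cases t' v <;> simp

noncomputable def pc {n : ℕ} (p : MvPolynomial (Fin n) ℝ) (t : Fin n → Bool) : ℝ := p.coeff (ex t)

lemma poly_expand {n : ℕ} (p : MvPolynomial (Fin n) ℝ) (hp : IsMultilinear p) :
    p = ∑ t, MvPolynomial.monomial (ex t) (pc p t) := by
  classical
  ext m
  rw [MvPolynomial.coeff_sum]
  simp only [MvPolynomial.coeff_monomial]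
  by_cases hm : ∃ t, ex t = m
  · obtain ⟨t, rfl⟩ := hm
    rw [Finset.sum_eq_single t]
    · simp [pc]
    · intro t' _ hne
      rw [if_neg]
      exact fun h => hne (ex_inj h)
    · simp
  · rw [Finset.sum_eq_zero]
    · by_contra h
      apply hm
      refine ⟨fun v => decide (m v = 1), ?_⟩
      ext v
      have h1 := (MvPolynomial.monomial_le_degreeOf v (MvPolynomial.mem_support_iff.mpr h)).trans
        (hp v)
      have : m v = 0 ∨ m v = 1 := by omega
      rcases this with h | h <;> simp [h]
    · intro t _
      rw [if_neg]
      exact fun h => hm ⟨t, h⟩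

lemma pc_card {n : ℕ} (p : MvPolynomial (Fin n) ℝ) (t : Fin n → Bool) (h : pc p t ≠ 0) :
    bcard t ≤ p.totalDegree := by
  have := MvPolynomial.le_totalDegree (MvPolynomial.mem_support_iff.mpr h)
  rw [Finsupp.sum_fintype _ _ (by simp)] at this
  exact this

lemma eval_mon {n : ℕ} (m : Fin n →₀ ℕ) (a : ℝ) (x : Fin n → ℝ) :
    MvPolynomial.eval x (MvPolynomial.monomial m a) = a * ∏ v, x v ^ m v := by
  rw [MvPolynomial.eval_monomial, Finsupp.prod_fintype _ _ (by simp)]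

lemma eval_expand {n : ℕ} (p : MvPolynomial (Fin n) ℝ) (hp : IsMultilinear p) (x : Fin n → ℝ) :
    MvPolynomial.eval x p = ∑ t, pc p t * ∏ v, x v ^ (t v).toNat := by
  conv_lhs => rw [poly_expand p hp]
  rw [map_sum]
  simp only [eval_mon, ex_apply]

lemma sum_sq_le {n : ℕ} (p : MvPolynomial (Fin n) ℝ) (hp : IsMultilinear p) (h : gaussL2 p ≤ 1) :
    ∑ t, pc p t ^ 2 ≤ 1 := by
  have : ∑ t, pc p t ^ 2 = gaussL2 p ^ 2 := by
    rw [gaussL2, Real.sq_sqrt (integral_nonneg fun x => sq_nonneg _)]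
    simp_rw [eval_expand p hp]
    rw [parseval]
    · intro t v _; cases t v <;> simp
    · intro t t' _ _ he
      exact ex_inj (by ext v; exact congrFun he v)
  rw [this]
  exact pow_le_one₀ (Real.sqrt_nonneg _) h

lemma infl_eq {n : ℕ} (p : MvPolynomial (Fin n) ℝ) (hp : IsMultilinear p) (i : Fin n) :
    influence i p = ∑ t, (if t i then pc p t ^ 2 else 0) := by
  have h : ∀ x, MvPolynomial.eval x (MvPolynomial.pderiv i p)
      = ∑ t : Fin n → Bool, (if t i then pc p t else 0) *
        ∏ v, x v ^ (if v = i then 0 else (t v).toNat) := by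
    intro x
    conv_lhs => rw [poly_expand p hp]
    rw [map_sum, map_sum]
    refine Finset.sum_congr rfl fun t _ => ?_
    rw [MvPolynomial.pderiv_monomial, eval_mon]
    cases ht : t i
    · simp [ht]
    · simp only [ex_apply, ht, Bool.toNat_true, Nat.cast_one, mul_one, if_true]
      congr 1
      refine Finset.prod_congr rfl fun v _ => ?_
      congr 1
      by_cases hv : v = i
      · subst hv; simp [ht]
      · simp [hv]
  unfold influence
  simp_rw [h]
  rw [parseval]
  · refine Finset.sum_congr rfl fun t _ => ?_
    split_ifs <;> simp
  · intro t v _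
    split_ifs
    · simp
    · cases t v <;> simp
  · intro t t' h1 h2 he
    apply ex_inj
    ext v
    by_cases hv : v = i
    · subst hv
      have e1 : t v = true := by by_contra h; simp [h] at h1
      have e2 : t' v = true := by by_contra h; simp [h] at h2
      simp [e1, e2]
    · simpa [hv] using congrFun he v

lemma mlin_eq {n : ℕ} (q : MvPolynomial (Fin n) ℝ) (s : Finset (Fin n →₀ ℕ)) (hs : q.support ⊆ s) :
    multilinearize q = ∑ a ∈ s,
      MvPolynomial.monomial (Finsupp.mapRange (· % 2) (Nat.zero_mod 2) a) (q.coeff a) := by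
  unfold multilinearize
  refine Finset.sum_subset hs fun a _ ha => ?_
  rw [MvPolynomial.notMem_support_iff.mp ha]
  simp

noncomputable def Lx {n : ℕ} (x : Fin n → ℝ) : MvPolynomial (Fin n) ℝ →ₗ[ℝ] ℝ where
  toFun q := MvPolynomial.eval x (multilinearize q)
  map_add' q r := by
    classical
    rw [mlin_eq (q + r) (q.support ∪ r.support) MvPolynomial.support_add,
      mlin_eq q (q.support ∪ r.support) Finset.subset_union_left,
      mlin_eq r (q.support ∪ r.support) Finset.subset_union_right, ← map_add,
      ← Finset.sum_add_distrib]
    simp only [MvPolynomial.coeff_add, map_add]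
  map_smul' c q := by
    rw [mlin_eq (c • q) q.support MvPolynomial.support_smul, mlin_eq q q.support subset_rfl]
    simp only [MvPolynomial.coeff_smul, map_sum, eval_mon, RingHom.id_apply, smul_eq_mul,
      Finset.mul_sum, mul_assoc]

lemma Lx_monomial {n : ℕ} (x : Fin n → ℝ) (m : Fin n →₀ ℕ) :
    Lx x (MvPolynomial.monomial m 1) = ∏ v, x v ^ (m v % 2) := by
  change MvPolynomial.eval x (multilinearize _) = _
  rw [mlin_eq _ {m} MvPolynomial.support_monomial_subset, Finset.sum_singleton, eval_mon]
  simp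

/-- exponents in the expansion of `A` -/
def eA {n k : ℕ} (T : Fin k → Fin n → Bool) (S : Finset (Fin k)) (v : Fin n) : ℕ :=
  ∑ i ∈ S, (T i v).toNat + (∑ i ∈ Sᶜ, (T i v).toNat) % 2

lemma term_expand {n k : ℕ} (p : Fin k → MvPolynomial (Fin n) ℝ) (hp : ∀ j, IsMultilinear (p j))
    (x : Fin n → ℝ) (S : Finset (Fin k)) :
    (∏ i ∈ S, MvPolynomial.eval x (p i)) * MvPolynomial.eval x (multilinearize (∏ i ∈ Sᶜ, p i))
      = ∑ T : Fin k → Fin n → Bool, (∏ i, pc (p i) (T i)) * ∏ v, x v ^ eA T S v := by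
  classical
  have split : ∀ (f g : Fin k → MvPolynomial (Fin n) ℝ),
      ∏ i, (if i ∈ S then f i else g i) = (∏ i ∈ S, f i) * ∏ i ∈ Sᶜ, g i := by
    intro f g
    rw [← Finset.prod_mul_prod_compl S]
    congr 1
    · exact Finset.prod_congr rfl fun i hi => if_pos hi
    · exact Finset.prod_congr rfl fun i hi => if_neg (by simpa using hi)
  have h1 : (∏ i ∈ S, MvPolynomial.eval x (p i)) *
      MvPolynomial.eval x (multilinearize (∏ i ∈ Sᶜ, p i))
      = Lx x (∏ i, (if i ∈ S then MvPolynomial.C (MvPolynomial.eval x (p i)) else p i)) := by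
    rw [split, ← map_prod MvPolynomial.C, MvPolynomial.C_mul', map_smul, smul_eq_mul]
    rfl
  have h2 : ∀ i, (if i ∈ S then MvPolynomial.C (MvPolynomial.eval x (p i)) else p i)
      = ∑ t, pc (p i) t • (if i ∈ S then MvPolynomial.C (∏ v, x v ^ (t v).toNat)
          else MvPolynomial.monomial (ex t) 1) := by
    intro i
    split_ifs with hi
    · rw [eval_expand _ (hp i), map_sum]
      refine Finset.sum_congr rfl fun t _ => ?_
      rw [map_mul, MvPolynomial.C_mul']
    · conv_lhs => rw [poly_expand _ (hp i)]
      refine Finset.sum_congr rfl fun t _ => ?_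
      rw [MvPolynomial.smul_monomial, smul_eq_mul, mul_one]
  rw [h1, Finset.prod_congr rfl fun i _ => h2 i, Finset.prod_univ_sum, Fintype.piFinset_univ,
    map_sum]
  refine Finset.sum_congr rfl fun T _ => ?_
  rw [Finset.prod_smul, map_smul, smul_eq_mul]
  congr 1
  rw [split, ← map_prod MvPolynomial.C, MvPolynomial.C_mul', map_smul, smul_eq_mul,
    ← MvPolynomial.monomial_sum_one, Lx_monomial, Finset.prod_comm, ← Finset.prod_mul_distrib]
  refine Finset.prod_congr rfl fun v _ => ?_
  rw [eA, pow_add, Finset.prod_pow_eq_pow_sum, Finsupp.finsetSum_apply]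
  rfl

lemma A_expand {n k : ℕ} (p : Fin k → MvPolynomial (Fin n) ℝ) (hp : ∀ j, IsMultilinear (p j))
    (x : Fin n → ℝ) :
    MvPolynomial.eval x (AError p) = ∑ X : (Fin k → Fin n → Bool) × Finset (Fin k),
      ((-1) ^ X.2.card * ∏ i, pc (p i) (X.1 i)) * ∏ v, x v ^ eA X.1 X.2 v := by
  rw [Fintype.sum_prod_type_right, AError, map_sum]
  refine Finset.sum_congr rfl fun S _ => ?_
  rw [map_mul, map_mul, map_prod, mul_assoc, term_expand p hp, Finset.mul_sum]
  refine Finset.sum_congr rfl fun T _ => ?_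
  simp [mul_assoc]

/-! ### The covariance of two monomial error terms -/

noncomputable def Phi {n k : ℕ} (T T' : Fin k → Fin n → Bool) : ℝ :=
  ∑ S : Finset (Fin k), ∑ S' : Finset (Fin k),
    (-1) ^ S.card * (-1) ^ S'.card * ∏ v, mom (eA T S v + eA T' S' v)

lemma A_sq {n k : ℕ} (p : Fin k → MvPolynomial (Fin n) ℝ) (hp : ∀ j, IsMultilinear (p j)) :
    ∫ x, (MvPolynomial.eval x (AError p)) ^ 2 ∂(stdGaussian n)
      = ∑ T : Fin k → Fin n → Bool, ∑ T' : Fin k → Fin n → Bool,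
        (∏ i, pc (p i) (T i)) * (∏ i, pc (p i) (T' i)) * Phi T T' := by
  simp_rw [A_expand p hp]
  rw [sq_integral, Fintype.sum_prod_type]
  refine Finset.sum_congr rfl fun T _ => ?_
  simp_rw [Fintype.sum_prod_type]
  rw [Finset.sum_comm]
  refine Finset.sum_congr rfl fun T' _ => ?_
  rw [Phi, Finset.mul_sum]
  refine Finset.sum_congr rfl fun S _ => ?_
  rw [Finset.mul_sum]
  refine Finset.sum_congr rfl fun S' _ => ?_
  ring

lemma eA_parity {n k : ℕ} (T : Fin k → Fin n → Bool) (S : Finset (Fin k)) (v : Fin n) :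
    eA T S v % 2 = (∑ i, (T i v).toNat) % 2 := by
  rw [eA, ← Finset.sum_add_sum_compl S]; omega

lemma eA_le {n k : ℕ} (T : Fin k → Fin n → Bool) (S : Finset (Fin k)) (v : Fin n) :
    eA T S v ≤ ∑ i, (T i v).toNat := by
  rw [eA, ← Finset.sum_add_sum_compl S]; omega

lemma Phi_symm {n k : ℕ} (T T' : Fin k → Fin n → Bool) : Phi T T' = Phi T' T := by
  unfold Phi
  rw [Finset.sum_comm]
  refine Finset.sum_congr rfl fun S _ => Finset.sum_congr rfl fun S' _ => ?_
  simp only [add_comm (eA T S' _)]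
  ring

lemma Phi_odd {n k : ℕ} (T T' : Fin k → Fin n → Bool) (v : Fin n)
    (h : (∑ i, (T i v).toNat + ∑ i, (T' i v).toNat) % 2 = 1) : Phi T T' = 0 := by
  refine Finset.sum_eq_zero fun S _ => Finset.sum_eq_zero fun S' _ => ?_
  rw [Finset.prod_eq_zero (Finset.mem_univ v), mul_zero]
  apply mom_odd
  rw [Nat.odd_iff]
  have h1 := eA_parity T S v
  have h2 := eA_parity T' S' v
  omega

lemma Phi_zero_left {n k : ℕ} (T T' : Fin k → Fin n → Bool)
    (he : ∀ v, (∑ i, (T i v).toNat + ∑ i, (T' i v).toNat) % 2 = 0) (i : Fin k)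
    (h : ∀ v, T i v = true → ∑ i, (T i v).toNat + ∑ i, (T' i v).toNat ≤ 2) : Phi T T' = 0 := by
  classical
  unfold Phi
  rw [Finset.sum_comm]
  refine Finset.sum_eq_zero fun S' _ => ?_
  have hG : ∀ S : Finset (Fin k), i ∉ S →
      ∏ v, mom (eA T (insert i S) v + eA T' S' v) = ∏ v, mom (eA T S v + eA T' S' v) := by
    intro S hS
    refine Finset.prod_congr rfl fun v _ => ?_
    cases hv : T i v
    · congr 2
      unfold eA
      rw [Finset.sum_insert hS, Finset.compl_insert, Finset.sum_erase _ (by simp [hv])]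
      simp [hv]
    · have h0 := h v hv
      have h1 := he v
      have h4 := eA_le T' S' v
      have h5 := eA_parity T' S' v
      have key : ∀ S, mom (eA T S v + eA T' S' v) = 1 := by
        intro S
        have h2 := eA_le T S v
        have h3 := eA_parity T S v
        exact mom_small _ (by omega) (by rw [Nat.even_iff]; omega)
      rw [key, key]
  have hF : ∀ S : Finset (Fin k), i ∉ S →
      ((-1 : ℝ) ^ S.card * (-1) ^ S'.card * ∏ v, mom (eA T S v + eA T' S' v)) +
      ((-1 : ℝ) ^ (insert i S).card * (-1) ^ S'.card *
        ∏ v, mom (eA T (insert i S) v + eA T' S' v)) = 0 := by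
    intro S hS
    rw [hG S hS, Finset.card_insert_of_notMem hS, pow_succ]
    ring
  refine Finset.sum_involution (fun S _ => if i ∈ S then S.erase i else insert i S) ?_ ?_ ?_ ?_
  · intro S _
    split_ifs with hS
    · have := hF (S.erase i) (Finset.notMem_erase i S)
      rw [Finset.insert_erase hS] at this
      rw [add_comm]; exact this
    · exact hF S hS
  · intro S _ _
    split_ifs with hS
    · intro hh; rw [← hh] at hS; exact Finset.notMem_erase i S hS
    · intro hh; apply hS; rw [← hh]; exact Finset.mem_insert_self i S
  · intro S _; exact Finset.mem_univ _
  · intro S _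
    by_cases hS : i ∈ S
    · simp [hS, Finset.insert_erase hS]
    · simp [hS, Finset.erase_insert hS]

/-- the incidence matrix of a pair of tuples -/
def MM {n k : ℕ} (T T' : Fin k → Fin n → Bool) : Fin n → (Fin k ⊕ Fin k) → Bool :=
  fun v => Sum.elim (fun i => T i v) (fun i => T' i v)

lemma bcard_MM {n k : ℕ} (T T' : Fin k → Fin n → Bool) (v : Fin n) :
    bcard (MM T T' v) = ∑ i, (T i v).toNat + ∑ i, (T' i v).toNat := by
  simp [bcard, MM]

lemma Phi_zero {n k : ℕ} (T T' : Fin k → Fin n → Bool) (h : ¬ Valid (MM T T')) : Phi T T' = 0 := by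
  by_contra hne
  have he : ∀ v, (∑ i, (T i v).toNat + ∑ i, (T' i v).toNat) % 2 = 0 := by
    intro v
    by_contra hv
    exact hne (Phi_odd T T' v (by omega))
  apply h
  refine ⟨fun v => ?_, fun j => ?_⟩
  · rw [bcard_MM]
    have := he v
    omega
  · by_contra hcon
    push Not at hcon
    apply hne
    cases j with
    | inl i =>
      refine Phi_zero_left T T' he i fun v hv => ?_
      have h1 := hcon v hv
      rw [bcard_MM] at h1
      have := he v
      omega
    | inr i =>
      rw [Phi_symm]
      refine Phi_zero_left T' T (fun v => by rw [add_comm]; exact he v) i fun v hv => ?_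
      have h1 := hcon v hv
      rw [bcard_MM] at h1
      have := he v
      omega

noncomputable def RR (k : ℕ) : ℝ := 1 + ∑ r ∈ Finset.range (2 * k + 1), |mom r|

lemma RR_one (k : ℕ) : 1 ≤ RR k := by
  have : 0 ≤ ∑ r ∈ Finset.range (2 * k + 1), |mom r| := Finset.sum_nonneg fun _ _ => abs_nonneg _
  unfold RR; linarith

lemma mom_le_RR (k r : ℕ) (h : r ≤ 2 * k) : |mom r| ≤ RR k := by
  have := Finset.single_le_sum (f := fun r => |mom r|) (fun r _ => abs_nonneg _)
    (Finset.mem_range.mpr (by omega : r < 2 * k + 1))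
  unfold RR; linarith

lemma Phi_bound {n k d : ℕ} (T T' : Fin k → Fin n → Bool) (hT : ∀ i, bcard (T i) ≤ d)
    (hT' : ∀ i, bcard (T' i) ≤ d) : |Phi T T'| ≤ (2 ^ k * 2 ^ k) * RR k ^ (k * d + k * d) := by
  have hsum : ∀ T : Fin k → Fin n → Bool, (∀ i, bcard (T i) ≤ d) →
      ∑ v, ∑ i, (T i v).toNat ≤ k * d := by
    intro T hT
    rw [Finset.sum_comm]
    calc _ ≤ ∑ i : Fin k, d := Finset.sum_le_sum fun i _ => hT i
      _ = k * d := by simp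
  have hle : ∀ (T : Fin k → Fin n → Bool) v, ∑ i, (T i v).toNat ≤ k := by
    intro T v
    calc _ ≤ ∑ i : Fin k, 1 := Finset.sum_le_sum fun i _ => by cases T i v <;> simp
      _ = k := by simp
  have hprod : ∀ S S' : Finset (Fin k),
      |∏ v, mom (eA T S v + eA T' S' v)| ≤ RR k ^ (k * d + k * d) := by
    intro S S'
    rw [Finset.abs_prod]
    calc _ ≤ ∏ v, RR k ^ (∑ i, (T i v).toNat + ∑ i, (T' i v).toNat) := by
          refine Finset.prod_le_prod (fun v _ => abs_nonneg _) fun v _ => ?_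
          have h1 := eA_le T S v
          have h2 := eA_le T' S' v
          have h3 := hle T v
          have h4 := hle T' v
          by_cases h0 : ∑ i, (T i v).toNat + ∑ i, (T' i v).toNat = 0
          · have : eA T S v + eA T' S' v = 0 := by omega
            rw [this, h0, mom_zero]; simp
          · exact (mom_le_RR k _ (by omega)).trans (le_self_pow₀ (RR_one k) h0)
      _ = RR k ^ (∑ v, (∑ i, (T i v).toNat + ∑ i, (T' i v).toNat)) :=
          Finset.prod_pow_eq_pow_sum _ _ _
      _ ≤ RR k ^ (k * d + k * d) := by
          refine pow_le_pow_right₀ (RR_one k) ?_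
          rw [Finset.sum_add_distrib]
          exact add_le_add (hsum T hT) (hsum T' hT')
  unfold Phi
  calc _ ≤ ∑ S : Finset (Fin k), |∑ S' : Finset (Fin k),
            (-1) ^ S.card * (-1) ^ S'.card * ∏ v, mom (eA T S v + eA T' S' v)| :=
        Finset.abs_sum_le_sum_abs _ _
    _ ≤ ∑ S : Finset (Fin k), ∑ S' : Finset (Fin k), RR k ^ (k * d + k * d) := by
        refine Finset.sum_le_sum fun S _ => (Finset.abs_sum_le_sum_abs _ _).trans ?_
        refine Finset.sum_le_sum fun S' _ => ?_
        rw [abs_mul, abs_mul, abs_pow, abs_pow]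
        simpa using hprod S S'
    _ = _ := by simp [mul_assoc]

/-- For all `k, d` there is `C` such that if `p₁, …, p_k` are multilinear of degree at most `d`
with `|p_j|₂ ≤ 1` and all influences at most `τ > 0`, then `|A(p₁, …, p_k)|₂ ≤ C τ^{k/4}`. -/
theorem A_bound_prop (k d : ℕ) (hk : 0 < k) (hd : 0 < d) :
    ∃ C : ℝ, 0 < C ∧
      ∀ (n : ℕ) (τ : ℝ), 0 < τ →
        ∀ p : Fin k → MvPolynomial (Fin n) ℝ,
          (∀ j, IsMultilinear (p j)) → (∀ j, (p j).totalDegree ≤ d) →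
          (∀ j, gaussL2 (p j) ≤ 1) → (∀ (i : Fin n) (j : Fin k), influence i (p j) ≤ τ) →
          gaussL2 (AError p) ≤ C * τ ^ ((k : ℝ) / 4) := by
  classical
  set N : ℕ := Fintype.card (Fin k ⊕ Fin k) with hN
  have hN2 : N = k * 2 := by simp [hN]; omega
  set K : ℝ := ((1 + 2 ^ N) ^ 4) ^ d * (((1 + 2 ^ N) ^ 2) ^ d) ^ 2 * 2 ^ d with hK
  have hK0 : 0 < K := by positivity
  set B : ℝ := (2 ^ k * 2 ^ k) * RR k ^ (k * d + k * d) with hB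
  have hB0 : 0 < B := by
    have := RR_one k
    have : 0 < RR k := by linarith
    positivity
  refine ⟨Real.sqrt B * K ^ ((k : ℝ) / 4), by positivity, ?_⟩
  intro n τ hτ p hp hdeg hnorm hinf
  haveI : Nonempty (Fin k ⊕ Fin k) := ⟨Sum.inl ⟨0, hk⟩⟩
  set β : ℝ := (K * τ) ^ ((1:ℝ) / 4) with hβ
  have hKτ : 0 ≤ K * τ := by positivity
  have hβ0 : 0 ≤ β := Real.rpow_nonneg hKτ _
  have hβ4 : β ^ 4 = K * τ := by
    rw [hβ, ← Real.rpow_natCast, ← Real.rpow_mul hKτ]; norm_num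
  have hβk : β ^ k = K ^ ((k : ℝ) / 4) * τ ^ ((k : ℝ) / 4) := by
    rw [hβ, ← Real.rpow_natCast, ← Real.rpow_mul hKτ, ← Real.mul_rpow hK0.le hτ.le]
    congr 1; ring
  set c : (Fin k ⊕ Fin k) → (Fin n → Bool) → ℝ := fun j t => |pc (p (Sum.elim id id j)) t| with hc
  have hcomb := comb n d τ hτ.le c (fun j t => abs_nonneg _)
    (fun j t h => (pc_card _ t (by simpa [hc] using h)).trans (hdeg _))
    (fun j => by simpa [hc] using sum_sq_le _ (hp _) (hnorm (Sum.elim id id j)))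
    (fun j v => by
      have := hinf v (Sum.elim id id j)
      rw [infl_eq _ (hp _)] at this
      simpa [hc] using this) β hβ0 (by rw [hβ4])
  have hmain : ∫ x, (MvPolynomial.eval x (AError p)) ^ 2 ∂(stdGaussian n) ≤ B * (β ^ k) ^ 2 := by
    rw [A_sq p hp, ← pow_mul, ← hN2]
    refine le_trans ?_ (mul_le_mul_of_nonneg_left hcomb hB0.le)
    rw [Finset.mul_sum, ← Fintype.sum_prod_type']
    refine sum_le_sum_inj (fun X => MM X.1 X.2) _ _ ?_ ?_ ?_
    · rintro ⟨T, T'⟩ ⟨U, U'⟩ _ _ he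
      simp only at he
      refine Prod.ext ?_ ?_
      · funext i v
        exact congrFun (congrFun he v) (Sum.inl i)
      · funext i v
        exact congrFun (congrFun he v) (Sum.inr i)
    · intro M
      refine mul_nonneg hB0.le ?_
      split_ifs
      · exact Finset.prod_nonneg fun j _ => abs_nonneg _
      · exact le_rfl
    · rintro ⟨T, T'⟩ hne
      simp only at hne ⊢
      have hV : Valid (MM T T') := by
        by_contra h
        rw [Phi_zero T T' h] at hne
        simp at hne
      rw [if_pos hV]
      have h1 : ∏ i, pc (p i) (T i) ≠ 0 := fun h => hne (by rw [h]; ring)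
      have h2 : ∏ i, pc (p i) (T' i) ≠ 0 := fun h => hne (by rw [h]; ring)
      rw [Finset.prod_ne_zero_iff] at h1 h2
      have hb := Phi_bound (d := d) T T'
        (fun i => (pc_card _ _ (h1 i (Finset.mem_univ _))).trans (hdeg i))
        (fun i => (pc_card _ _ (h2 i (Finset.mem_univ _))).trans (hdeg i))
      have hprod : ∏ j, c j (fun v => MM T T' v j)
          = |∏ i, pc (p i) (T i)| * |∏ i, pc (p i) (T' i)| := by
        rw [Fintype.prod_sum_type, Finset.abs_prod, Finset.abs_prod]
        rfl
      rw [hprod]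
      refine (le_abs_self _).trans ?_
      rw [abs_mul, abs_mul, mul_comm B]
      gcongr
  unfold gaussL2
  calc _ ≤ Real.sqrt (B * (β ^ k) ^ 2) := Real.sqrt_le_sqrt hmain
    _ = Real.sqrt B * β ^ k := by
      rw [Real.sqrt_mul hB0.le, Real.sqrt_sq (by positivity)]
    _ = _ := by rw [hβk]; ring
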